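/- arXiv:2308.10394 — 3 statements merged into one kernel-verified Lean document; each statement's English description precedes it below -/
import Mathlib

section
/- Let G be a subgroup of S_n with block partition 𝓑. Every order-automorphism Ψ of U_{G⋌𝓑} maps T onto itself, the restriction σ := Ψ|_T is an element of G, and Ψ is uniquely determined by σ: namely Ψ fixes F pointwise, Ψ(θ) = σθ for every θ ∈ G, and Ψ(j,μ) = (j, σ∘μ) for every μ and every j ∈ dom(μ). -/
/-!
The rank of a point is its height: a point of rank `k + 1` has a point of rank `k` below it. Hence
an automorphism preserves ranks (`UPt.rank_orderIso`). The points `ℓ_i` are the points of rank `0`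
lying below a point of rank `1`, so each of the layers `ℓ`, `u`, `G`, `⋃ D^μ`, `T` is invariant.

The fence has no nontrivial automorphism respecting its two layers (`fence_rigid`): `ℓ_1` is the
only lower point under a single upper point, and the remaining points are then fixed one by one.
So `Ψ` fixes every `u_j`. Since `u_j` lies under exactly the cells `(j, μ)`, the image of `(j, μ)`
is `(j, ν)`, and `dom ν = dom μ` because both are the block containing `j`.

Let `Ψ θ = θ'`. From `θ < (j, θ|_B) < θ(j)` one gets `Ψ (j, θ|_B) = (j, θ'|_B)` and
`Ψ (θ(j)) = θ'(j)`. With `σ := Ψ 1`, the case `θ = 1` says that `Ψ` acts on `T` as `σ`, and then the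
general case says that `θ' = σθ`.
-/

/-- The set of restrictions `θ|_B` (as functions `B → Fin n`) of elements `θ ∈ G`
to blocks `B ∈ 𝓑`, i.e. `⋃_{B ∈ 𝓑} G|_B`. -/
def Restr (n : ℕ) (G : Subgroup (Equiv.Perm (Fin n))) (𝓑 : Set (Set (Fin n))) :
    Set ((B : Set (Fin n)) × (B → Fin n)) :=
  { p | p.1 ∈ 𝓑 ∧ ∃ θ ∈ G, p.2 = fun x => θ x.1 }

/-- The underlying set of the ordered set `U_{G⋌𝓑}`:
the fence `F = {ℓ_1,u_1,…,ℓ_n,u_n}` (constructors `low`, `up`), the copy of `G`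
(constructor `grp`), the sets `D^μ = dom(μ) × {μ}` (constructor `cell`), and the
copy of `T = {1,…,n}` (constructor `pt`). -/
inductive UPt (n : ℕ) (G : Subgroup (Equiv.Perm (Fin n))) (𝓑 : Set (Set (Fin n))) where
  | low : Fin n → UPt n G 𝓑
  | up : Fin n → UPt n G 𝓑
  | grp : G → UPt n G 𝓑
  | cell : (μ : Restr n G 𝓑) → (j : μ.1.1) → UPt n G 𝓑
  | pt : Fin n → UPt n G 𝓑

/-- The generating strict comparabilities of `U_{G⋌𝓑}`:
`ℓ_i < u_i`, `ℓ_{i+1} < u_i`, `u_j < (j,μ)`, `(j,μ) < μ(j)`, and `θ < (j, θ|_B)`. -/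
inductive UStep (n : ℕ) (G : Subgroup (Equiv.Perm (Fin n))) (𝓑 : Set (Set (Fin n))) :
    UPt n G 𝓑 → UPt n G 𝓑 → Prop where
  | fence_eq (i : Fin n) : UStep n G 𝓑 (.low i) (.up i)
  | fence_succ (i j : Fin n) (h : (j : ℕ) = (i : ℕ) + 1) : UStep n G 𝓑 (.low j) (.up i)
  | up_cell (μ : Restr n G 𝓑) (j : μ.1.1) : UStep n G 𝓑 (.up j.1) (.cell μ j)
  | cell_pt (μ : Restr n G 𝓑) (j : μ.1.1) : UStep n G 𝓑 (.cell μ j) (.pt (μ.1.2 j))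
  | grp_cell (θ : G) (μ : Restr n G 𝓑) (j : μ.1.1)
      (h : ∀ x : μ.1.1, μ.1.2 x = (θ : Equiv.Perm (Fin n)) x.1) :
      UStep n G 𝓑 (.grp θ) (.cell μ j)

/-- Rank function used to prove antisymmetry of the generated order. -/
def UPt.rank {n : ℕ} {G : Subgroup (Equiv.Perm (Fin n))} {𝓑 : Set (Set (Fin n))} :
    UPt n G 𝓑 → ℕ
  | .low _ => 0
  | .grp _ => 0
  | .up _ => 1
  | .cell _ _ => 2
  | .pt _ => 3

theorem UStep.rank_lt {n : ℕ} {G : Subgroup (Equiv.Perm (Fin n))} {𝓑 : Set (Set (Fin n))}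
    {x y : UPt n G 𝓑} (h : UStep n G 𝓑 x y) : x.rank < y.rank := by
  cases h <;> simp [UPt.rank]

/-- The order of `U_{G⋌𝓑}`: the reflexive-transitive closure of the generating
comparabilities. -/
instance UPt.instPartialOrder (n : ℕ) (G : Subgroup (Equiv.Perm (Fin n)))
    (𝓑 : Set (Set (Fin n))) : PartialOrder (UPt n G 𝓑) where
  le := Relation.ReflTransGen (UStep n G 𝓑)
  le_refl _ := Relation.ReflTransGen.refl
  le_trans _ _ _ := Relation.ReflTransGen.trans
  le_antisymm a b hab hba := by
    have mono : ∀ {x y : UPt n G 𝓑}, Relation.ReflTransGen (UStep n G 𝓑) x y →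
        x.rank ≤ y.rank := by
      intro x y h
      induction h with
      | refl => exact le_rfl
      | tail _ h2 ih => exact ih.trans h2.rank_lt.le
    rcases hab.cases_head with h | ⟨c, hc, hcb⟩
    · exact h
    rcases hba.cases_head with h | ⟨d, hd, hda⟩
    · exact h.symm
    have h1 := hc.rank_lt
    have h2 := mono hcb
    have h3 := hd.rank_lt
    have h4 := mono hda
    omega

/-- `B` is a block for `G`: for every `σ ∈ G`, `σ[B] ∩ B ≠ ∅` implies `σ[B] = B`. -/
def IsBlockOf (n : ℕ) (G : Subgroup (Equiv.Perm (Fin n))) (B : Set (Fin n)) : Prop :=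
  ∀ σ ∈ G, ((σ : Equiv.Perm (Fin n)) '' B ∩ B).Nonempty → (σ : Equiv.Perm (Fin n)) '' B = B

/-- A block partition `𝓑 = ⋃_{j=1}^ℓ G·B_j` for `G` with orbit cut `{B_1,…,B_ℓ}`
(the `B_j` are the `cut j`): the `B_j` are nonempty blocks, the family of all images
`σ[B_i]` (`σ ∈ G`) partitions `{1,…,n}`, and distinct members of the orbit cut lie in
distinct `G`-orbits of blocks. -/
structure BlockPartition (n : ℕ) (G : Subgroup (Equiv.Perm (Fin n))) where
  ℓ : ℕ
  cut : Fin ℓ → Set (Fin n)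
  nonempty_cut : ∀ i, (cut i).Nonempty
  isBlock_cut : ∀ i, IsBlockOf n G (cut i)
  partitions : ∀ x : Fin n,
    ∃! C : Set (Fin n), (∃ i, ∃ σ ∈ G, (σ : Equiv.Perm (Fin n)) '' cut i = C) ∧ x ∈ C
  cut_distinct_orbits : ∀ i j : Fin ℓ, ∀ σ ∈ G,
    (σ : Equiv.Perm (Fin n)) '' cut i = cut j → i = j

/-- The block partition `𝓑 = ⋃_{j=1}^ℓ G·B_j` as a set of subsets of `{1,…,n}`. -/
def BlockPartition.blocks {n : ℕ} {G : Subgroup (Equiv.Perm (Fin n))}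
    (P : BlockPartition n G) : Set (Set (Fin n)) :=
  { C | ∃ i, ∃ σ ∈ G, (σ : Equiv.Perm (Fin n)) '' P.cut i = C }

/-- Composition `σ ∘ μ` of a restriction `μ = θ|_B` with `σ ∈ G`; this is the
restriction `(σθ)|_B`. -/
def Restr.comp {n : ℕ} {G : Subgroup (Equiv.Perm (Fin n))} {𝓑 : Set (Set (Fin n))}
    (σ : G) (μ : Restr n G 𝓑) : Restr n G 𝓑 :=
  ⟨⟨μ.1.1, fun x => (σ : Equiv.Perm (Fin n)) (μ.1.2 x)⟩, by
    obtain ⟨hB, θ, hθ, hf⟩ := μ.2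
    refine ⟨hB, (σ : Equiv.Perm (Fin n)) * θ, mul_mem σ.2 hθ, ?_⟩
    funext x
    simp [hf]⟩

section Order

variable {n : ℕ} {G : Subgroup (Equiv.Perm (Fin n))} {𝓑 : Set (Set (Fin n))}

/-! ### Comparabilities in `U_{G⋌𝓑}` -/

theorem UStep.le {x y : UPt n G 𝓑} (h : UStep n G 𝓑 x y) : x ≤ y :=
  Relation.ReflTransGen.single h

theorem UPt.le_cases {x y : UPt n G 𝓑} (h : x ≤ y) : x = y ∨ ∃ z, x ≤ z ∧ UStep n G 𝓑 z y := by
  rcases Relation.ReflTransGen.cases_tail h with h | ⟨z, h1, h2⟩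
  · exact Or.inl h.symm
  · exact Or.inr ⟨z, h1, h2⟩

theorem UPt.rank_mono {x y : UPt n G 𝓑} (h : x ≤ y) : x.rank ≤ y.rank := by
  have h' : Relation.ReflTransGen (UStep n G 𝓑) x y := h
  induction h' with
  | refl => exact le_rfl
  | tail h1 h2 ih => exact (ih h1).trans h2.rank_lt.le

theorem UPt.rank_strictMono {x y : UPt n G 𝓑} (h : x < y) : x.rank < y.rank := by
  rcases UPt.le_cases h.le with h1 | ⟨z, h1, h2⟩
  · exact absurd h1 h.ne
  · exact (UPt.rank_mono h1).trans_lt h2.rank_lt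

theorem UPt.le_up {x : UPt n G 𝓑} {i : Fin n} (h : x ≤ .up i) :
    x = .up i ∨ ∃ j : Fin n, x = .low j ∧ (j = i ∨ (j : ℕ) = i + 1) := by
  rcases UPt.le_cases h with h | ⟨z, h1, h2⟩
  · exact Or.inl h
  · cases h2 with
    | fence_eq =>
      rcases UPt.le_cases h1 with h | ⟨w, _, h4⟩
      · exact Or.inr ⟨_, h, Or.inl rfl⟩
      · cases h4
    | fence_succ _ j hj =>
      rcases UPt.le_cases h1 with h | ⟨w, _, h4⟩
      · exact Or.inr ⟨_, h, Or.inr hj⟩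
      · cases h4

theorem UPt.low_le_up {i j : Fin n} (h : (.low j : UPt n G 𝓑) ≤ .up i) :
    j = i ∨ (j : ℕ) = i + 1 := by
  rcases UPt.le_up h with h | ⟨k, h, h'⟩
  · cases h
  · cases h; exact h'

theorem UPt.up_le_cell {i : Fin n} {μ : Restr n G 𝓑} {j : μ.1.1}
    (h : (.up i : UPt n G 𝓑) ≤ .cell μ j) : i = j.1 := by
  rcases UPt.le_cases h with h | ⟨z, h1, h2⟩
  · cases h
  · cases h2 with
    | up_cell =>
      rcases UPt.le_up h1 with h | ⟨k, h, h'⟩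
      · cases h; rfl
      · cases h
    | grp_cell θ =>
      have := UPt.rank_mono h1
      simp [UPt.rank] at this

theorem UPt.grp_le_cell {θ : G} {μ : Restr n G 𝓑} {j : μ.1.1}
    (h : (.grp θ : UPt n G 𝓑) ≤ .cell μ j) :
    ∀ x : μ.1.1, μ.1.2 x = (θ : Equiv.Perm (Fin n)) x.1 := by
  rcases UPt.le_cases h with h | ⟨z, h1, h2⟩
  · cases h
  · cases h2 with
    | up_cell =>
      rcases UPt.le_up h1 with h | ⟨k, h, h'⟩
      · cases h
      · cases h
    | grp_cell θ' _ _ hθ =>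
      rcases UPt.le_cases h1 with h | ⟨w, _, h4⟩
      · cases h; exact hθ
      · cases h4

theorem UPt.cell_le_pt {μ : Restr n G 𝓑} {j : μ.1.1} {k : Fin n}
    (h : (.cell μ j : UPt n G 𝓑) ≤ .pt k) : k = μ.1.2 j := by
  rcases UPt.le_cases h with h | ⟨z, h1, h2⟩
  · cases h
  · cases h2 with
    | cell_pt ν i =>
      rcases UPt.le_cases h1 with h | ⟨w, h3, h4⟩
      · cases h; rfl
      · have := UPt.rank_mono h3
        have := h4.rank_lt
        simp [UPt.rank] at *
        omega

theorem UPt.cell_ext {μ ν : Restr n G 𝓑} {i : μ.1.1} {j : ν.1.1} (hij : i.1 = j.1)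
    (hB : μ.1.1 = ν.1.1)
    (hf : ∀ x (hx : x ∈ μ.1.1) (hy : x ∈ ν.1.1), μ.1.2 ⟨x, hx⟩ = ν.1.2 ⟨x, hy⟩) :
    (UPt.cell μ i : UPt n G 𝓑) = .cell ν j := by
  obtain ⟨⟨B, f⟩, hμ⟩ := μ
  obtain ⟨⟨C, g⟩, hν⟩ := ν
  obtain ⟨i, hi⟩ := i
  obtain ⟨j, hj⟩ := j
  dsimp only at hB hij
  subst hB
  subst hij
  obtain rfl : f = g := funext fun x => hf x.1 x.2 x.2
  rfl

/-- The restriction `θ|_B`. -/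
def Restr.ofGrp (θ : G) {B : Set (Fin n)} (hB : B ∈ 𝓑) : Restr n G 𝓑 :=
  ⟨⟨B, fun x => (θ : Equiv.Perm (Fin n)) x.1⟩, hB, θ, θ.2, rfl⟩

/-! ### Invariance of the layers -/

/-- Since ranks are strictly monotone, this makes the rank of a point its height. -/
theorem UPt.exists_lt_rank (hcov : ∀ x : Fin n, ∃ B ∈ 𝓑, x ∈ B) (x : UPt n G 𝓑) (k : ℕ)
    (hx : x.rank = k + 1) : ∃ y < x, y.rank = k := by
  suffices ∃ y, UStep n G 𝓑 y x ∧ y.rank + 1 = x.rank by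
    obtain ⟨y, h, h'⟩ := this
    refine ⟨y, lt_of_le_of_ne h.le ?_, by omega⟩
    rintro rfl
    omega
  cases x with
  | low i => simp [UPt.rank] at hx
  | grp θ => simp [UPt.rank] at hx
  | up i => exact ⟨_, .fence_eq i, rfl⟩
  | cell μ j => exact ⟨_, .up_cell μ j, rfl⟩
  | pt i =>
    obtain ⟨B, hB, hi⟩ := hcov i
    exact ⟨_, .cell_pt (Restr.ofGrp 1 hB) ⟨i, hi⟩, rfl⟩

theorem UPt.rank_le_orderIso (hcov : ∀ x : Fin n, ∃ B ∈ 𝓑, x ∈ B)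
    (Ψ : UPt n G 𝓑 ≃o UPt n G 𝓑) (k : ℕ) (x : UPt n G 𝓑) (hx : x.rank = k) :
    k ≤ (Ψ x).rank := by
  induction k generalizing x with
  | zero => exact Nat.zero_le _
  | succ k ih =>
    obtain ⟨y, hy, hk⟩ := UPt.exists_lt_rank hcov x k hx
    exact (ih y hk).trans_lt (UPt.rank_strictMono (Ψ.lt_iff_lt.2 hy))

theorem UPt.rank_orderIso (hcov : ∀ x : Fin n, ∃ B ∈ 𝓑, x ∈ B)
    (Ψ : UPt n G 𝓑 ≃o UPt n G 𝓑) (x : UPt n G 𝓑) : (Ψ x).rank = x.rank := by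
  refine le_antisymm ?_ (UPt.rank_le_orderIso hcov Ψ _ x rfl)
  simpa using UPt.rank_le_orderIso hcov Ψ.symm _ (Ψ x) rfl

theorem UPt.exists_up (hcov : ∀ x : Fin n, ∃ B ∈ 𝓑, x ∈ B)
    (Ψ : UPt n G 𝓑 ≃o UPt n G 𝓑) (i : Fin n) : ∃ j, Ψ (.up i) = .up j := by
  have h := UPt.rank_orderIso hcov Ψ (.up i)
  generalize Ψ (.up i) = y at h
  cases y <;> simp [UPt.rank] at h ⊢

theorem UPt.exists_low (hcov : ∀ x : Fin n, ∃ B ∈ 𝓑, x ∈ B)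
    (Ψ : UPt n G 𝓑 ≃o UPt n G 𝓑) (i : Fin n) : ∃ j, Ψ (.low i) = .low j := by
  obtain ⟨k, hk⟩ := UPt.exists_up hcov Ψ i
  have h : Ψ (.low i) ≤ Ψ (.up i) := Ψ.le_iff_le.2 (UStep.fence_eq i).le
  rw [hk] at h
  rcases UPt.le_up h with h | ⟨j, hj, _⟩
  · have := UPt.rank_orderIso hcov Ψ (.low i)
    rw [h] at this
    cases this
  · exact ⟨j, hj⟩

theorem UPt.exists_grp (hcov : ∀ x : Fin n, ∃ B ∈ 𝓑, x ∈ B)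
    (Ψ : UPt n G 𝓑 ≃o UPt n G 𝓑) (θ : G) : ∃ θ', Ψ (.grp θ) = .grp θ' := by
  have h := UPt.rank_orderIso hcov Ψ (.grp θ)
  cases hy : Ψ (.grp θ) with
  | low i =>
    -- `Ψ⁻¹` maps fence minima to fence minima, so no group element can land there.
    obtain ⟨j, hj⟩ := UPt.exists_low hcov Ψ.symm i
    rw [← hy, Ψ.symm_apply_apply] at hj
    cases hj
  | grp θ' => exact ⟨θ', rfl⟩
  | up i => rw [hy] at h; cases h
  | cell μ j => rw [hy] at h; cases h
  | pt i => rw [hy] at h; cases h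

theorem UPt.exists_cell (hcov : ∀ x : Fin n, ∃ B ∈ 𝓑, x ∈ B)
    (Ψ : UPt n G 𝓑 ≃o UPt n G 𝓑) (μ : Restr n G 𝓑) (j : μ.1.1) :
    ∃ ν i, Ψ (.cell μ j) = .cell ν i := by
  have h := UPt.rank_orderIso hcov Ψ (.cell μ j)
  generalize Ψ (.cell μ j) = y at h
  cases y with
  | cell ν i => exact ⟨ν, i, rfl⟩
  | _ => cases h

theorem UPt.exists_pt (hcov : ∀ x : Fin n, ∃ B ∈ 𝓑, x ∈ B)
    (Ψ : UPt n G 𝓑 ≃o UPt n G 𝓑) (i : Fin n) : ∃ j, Ψ (.pt i) = .pt j := by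
  have h := UPt.rank_orderIso hcov Ψ (.pt i)
  generalize Ψ (.pt i) = y at h
  cases y <;> simp [UPt.rank] at h ⊢

/-! ### Rigidity of the fence -/

/-- Rigidity of the fence `ℓ_1 < u_1 > ℓ_2 < ⋯ < u_n`: a comparability-preserving pair of
bijections of its lower points (`a`) and its upper points (`b`) is the identity. -/
theorem fence_rigid (a b : Fin n → Fin n) (ha : Function.Injective a) (hb : Function.Injective b)
    (hab : ∀ i j : Fin n, (i = j ∨ (i : ℕ) = j + 1) → (a i = b j ∨ (a i : ℕ) = b j + 1)) :
    ∀ k : ℕ, ∀ hk : k < n, a ⟨k, hk⟩ = ⟨k, hk⟩ ∧ b ⟨k, hk⟩ = ⟨k, hk⟩ := by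
  intro k
  induction k with
  | zero =>
    intro hk
    have h0 : a ⟨0, hk⟩ = ⟨0, hk⟩ := by
      obtain ⟨i, hi⟩ := Finite.surjective_of_injective ha ⟨0, hk⟩
      obtain ⟨i, hin⟩ := i
      cases i with
      | zero => exact hi
      | succ i =>
        -- `ℓ_{i+2}` lies under two upper points, but its image `ℓ_1` only under one.
        have h1 := hab ⟨i + 1, hin⟩ ⟨i + 1, hin⟩ (Or.inl rfl)
        have h2 := hab ⟨i + 1, hin⟩ ⟨i, by omega⟩ (Or.inr rfl)
        rw [hi] at h1 h2
        simp only [Nat.zero_ne_add_one, or_false] at h1 h2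
        have h3 := hb (h1.symm.trans h2)
        simp at h3
    refine ⟨h0, ?_⟩
    have h1 := hab ⟨0, hk⟩ ⟨0, hk⟩ (Or.inl rfl)
    rw [h0] at h1
    rcases h1 with h1 | h1
    · exact h1.symm
    · simp at h1
  | succ k ih =>
    intro hk
    obtain ⟨iha, ihb⟩ := ih (by omega)
    have h0 : a ⟨k + 1, hk⟩ = ⟨k + 1, hk⟩ := by
      have h1 := hab ⟨k + 1, hk⟩ ⟨k, by omega⟩ (Or.inr rfl)
      rw [ihb] at h1
      rcases h1 with h1 | h1
      · have h2 := ha (h1.trans iha.symm)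
        simp at h2
      · exact Fin.ext h1
    refine ⟨h0, ?_⟩
    have h1 := hab ⟨k + 1, hk⟩ ⟨k + 1, hk⟩ (Or.inl rfl)
    rw [h0] at h1
    rcases h1 with h1 | h1
    · exact h1.symm
    · have h2 : b ⟨k + 1, hk⟩ = b ⟨k, by omega⟩ := by
        rw [ihb]
        ext
        simp only at h1 ⊢
        omega
      have h3 := hb h2
      simp at h3

theorem UPt.fence_fixed (hcov : ∀ x : Fin n, ∃ B ∈ 𝓑, x ∈ B)
    (Ψ : UPt n G 𝓑 ≃o UPt n G 𝓑) (i : Fin n) :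
    Ψ (.low i) = .low i ∧ Ψ (.up i) = .up i := by
  choose a ha using UPt.exists_low hcov Ψ
  choose b hb using UPt.exists_up hcov Ψ
  have key := fence_rigid a b
    (fun i j h => by
      have := Ψ.injective ((ha i).trans ((congrArg _ h).trans (ha j).symm))
      cases this; rfl)
    (fun i j h => by
      have := Ψ.injective ((hb i).trans ((congrArg _ h).trans (hb j).symm))
      cases this; rfl)
    (fun i j h => by
      have hle : (.low i : UPt n G 𝓑) ≤ .up j := by
        rcases h with rfl | h
        · exact (UStep.fence_eq i).le
        · exact (UStep.fence_succ j i h).le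
      have h2 := Ψ.le_iff_le.2 hle
      rw [ha, hb] at h2
      exact UPt.low_le_up h2) i.1 i.2
  exact ⟨(ha i).trans (congrArg _ key.1), (hb i).trans (congrArg _ key.2)⟩

/-! ### Action on cells and points -/

/-- If `Ψ θ = θ'`, then `Ψ (j, θ|_B) = (j, θ'|_B)` and `Ψ` maps the point `θ(j)` to `θ'(j)`. -/
theorem UPt.cell_image (hpart : ∀ x : Fin n, ∃! B, B ∈ 𝓑 ∧ x ∈ B)
    (Ψ : UPt n G 𝓑 ≃o UPt n G 𝓑) {θ θ' : G} (hθ : Ψ (.grp θ) = .grp θ')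
    (μ : Restr n G 𝓑) (j : μ.1.1)
    (hμ : ∀ x : μ.1.1, μ.1.2 x = (θ : Equiv.Perm (Fin n)) x.1) :
    Ψ (.cell μ j) = .cell (Restr.ofGrp θ' μ.2.1) j ∧
      Ψ (.pt ((θ : Equiv.Perm (Fin n)) j)) = .pt ((θ' : Equiv.Perm (Fin n)) j) := by
  have hcov : ∀ x : Fin n, ∃ B ∈ 𝓑, x ∈ B := fun x => (hpart x).exists
  obtain ⟨ν, i, hν⟩ := UPt.exists_cell hcov Ψ μ j
  have hji : j.1 = i.1 := by
    have h := Ψ.le_iff_le.2 (UStep.up_cell μ j).le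
    rw [(UPt.fence_fixed hcov Ψ _).2, hν] at h
    exact UPt.up_le_cell h
  have hνθ : ∀ x : ν.1.1, ν.1.2 x = (θ' : Equiv.Perm (Fin n)) x.1 := by
    have h := Ψ.le_iff_le.2 (UStep.grp_cell θ μ j hμ).le
    rw [hθ, hν] at h
    exact UPt.grp_le_cell h
  have hB : ν.1.1 = μ.1.1 :=
    (hpart j.1).unique ⟨ν.2.1, hji ▸ i.2⟩ ⟨μ.2.1, j.2⟩
  refine ⟨hν.trans (UPt.cell_ext hji.symm hB fun x hx _ => hνθ ⟨x, hx⟩), ?_⟩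
  obtain ⟨k, hk⟩ := UPt.exists_pt hcov Ψ ((θ : Equiv.Perm (Fin n)) j)
  have h := Ψ.le_iff_le.2 (UStep.cell_pt μ j).le
  rw [hμ, hk, hν] at h
  rw [hk, UPt.cell_le_pt h, hνθ, hji]

end Order

/-- Every order-automorphism `Ψ` of `U_{G⋌𝓑}` maps `T` onto itself via a
permutation `σ = Ψ|_T` belonging to `G`, and `Ψ` is uniquely determined by `σ`:
`Ψ` fixes the fence `F` pointwise, `Ψ(θ) = σθ` for `θ ∈ G`, and `Ψ(j,μ) = (j, σ∘μ)`. -/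
theorem automorphism_determined_by_restriction (n : ℕ) (hn : 1 ≤ n)
    (G : Subgroup (Equiv.Perm (Fin n))) (P : BlockPartition n G)
    (Ψ : UPt n G P.blocks ≃o UPt n G P.blocks) :
    ∃ σ : G,
      (∀ j : Fin n, Ψ (UPt.pt j) = UPt.pt ((σ : Equiv.Perm (Fin n)) j)) ∧
      (∀ i : Fin n, Ψ (UPt.low i) = UPt.low i) ∧
      (∀ i : Fin n, Ψ (UPt.up i) = UPt.up i) ∧
      (∀ θ : G, Ψ (UPt.grp θ) = UPt.grp (σ * θ)) ∧
      (∀ (μ : Restr n G P.blocks) (j : μ.1.1),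
        Ψ (UPt.cell μ j) = UPt.cell (Restr.comp σ μ) j) := by
  have hpart : ∀ x : Fin n, ∃! B, B ∈ P.blocks ∧ x ∈ B := P.partitions
  have hcov : ∀ x : Fin n, ∃ B ∈ P.blocks, x ∈ B := fun x => (hpart x).exists
  obtain ⟨σ, hσ⟩ := UPt.exists_grp hcov Ψ 1
  have himage : ∀ θ θ' : G, Ψ (.grp θ) = .grp θ' → ∀ j : Fin n,
      Ψ (.pt ((θ : Equiv.Perm (Fin n)) j)) = .pt ((θ' : Equiv.Perm (Fin n)) j) := by
    intro θ θ' hθ j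
    obtain ⟨B, hB, hj⟩ := hcov j
    exact (UPt.cell_image hpart Ψ hθ (Restr.ofGrp θ hB) ⟨j, hj⟩ fun _ => rfl).2
  have hpt : ∀ j : Fin n, Ψ (.pt j) = .pt ((σ : Equiv.Perm (Fin n)) j) := himage 1 σ hσ
  have hgrp : ∀ θ : G, Ψ (.grp θ) = .grp (σ * θ) := by
    intro θ
    obtain ⟨θ', hθ⟩ := UPt.exists_grp hcov Ψ θ
    suffices θ' = σ * θ by rw [hθ, this]
    ext j : 2
    have h := himage θ θ' hθ j
    rw [hpt] at h
    injection h with h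
    exact h.symm
  refine ⟨σ, hpt, fun i => (UPt.fence_fixed hcov Ψ i).1, fun i => (UPt.fence_fixed hcov Ψ i).2,
    hgrp, fun μ j => ?_⟩
  obtain ⟨θ, hθ, hμ⟩ := μ.2.2
  have hμ' : ∀ x : μ.1.1, μ.1.2 x = θ x.1 := fun x => congrFun hμ x
  rw [(UPt.cell_image hpart Ψ (hgrp ⟨θ, hθ⟩) μ j hμ').1]
  refine UPt.cell_ext rfl rfl fun x hx _ => ?_
  exact congrArg (σ : Equiv.Perm (Fin n)) (hμ' ⟨x, hx⟩).symm
end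

section
/- Let G be a subgroup of S_n with block partition 𝓑 and let σ ∈ G. The map Φ_σ on U_{G⋌𝓑} defined by Φ_σ|_F = id_F, Φ_σ(j) = σ(j) for j ∈ T, Φ_σ(j,μ) = (j, σ∘μ) for every μ ∈ ⋃_{B∈𝓑} G|_B and j ∈ dom(μ), and Φ_σ(θ) = σθ for θ ∈ G, is an order-automorphism of U_{G⋌𝓑} whose restriction to T is σ. -/
/-- The map `Φ_σ` on `U_{G⋌𝓑}`, for an arbitrary family `𝓑` of subsets. -/
def UPt.act {n : ℕ} {G : Subgroup (Equiv.Perm (Fin n))} {𝓑 : Set (Set (Fin n))} (σ : G) :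
    UPt n G 𝓑 → UPt n G 𝓑
  | .low i => .low i
  | .up i => .up i
  | .grp θ => .grp (σ * θ)
  | .cell μ j => .cell (Restr.comp σ μ) j
  | .pt j => .pt ((σ : Equiv.Perm (Fin n)) j)

theorem UStep.act {n : ℕ} {G : Subgroup (Equiv.Perm (Fin n))} {𝓑 : Set (Set (Fin n))} (σ : G)
    {x y : UPt n G 𝓑} (h : UStep n G 𝓑 x y) : UStep n G 𝓑 (x.act σ) (y.act σ) := by
  cases h with
  | fence_eq i => exact .fence_eq i
  | fence_succ i j h => exact .fence_succ i j h
  | up_cell μ j => exact .up_cell (Restr.comp σ μ) j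
  | cell_pt μ j => exact .cell_pt (Restr.comp σ μ) j
  | grp_cell θ μ j h =>
    exact .grp_cell (σ * θ) (Restr.comp σ μ) j
      fun x => congrArg (σ : Equiv.Perm (Fin n)) (h x)

theorem UPt.act_mono {n : ℕ} {G : Subgroup (Equiv.Perm (Fin n))} {𝓑 : Set (Set (Fin n))} (σ : G) :
    Monotone (UPt.act (𝓑 := 𝓑) σ) :=
  fun x y h => Relation.ReflTransGen.lift (UPt.act σ) (fun _ _ => UStep.act σ) x y h

/-- On the cells this holds definitionally because `Restr.comp` keeps the domain of `μ`,
so the second component `j` needs no transport. -/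
theorem UPt.act_act {n : ℕ} {G : Subgroup (Equiv.Perm (Fin n))} {𝓑 : Set (Set (Fin n))} (σ τ : G)
    (x : UPt n G 𝓑) : (x.act τ).act σ = x.act (σ * τ) := by
  cases x with
  | grp θ => exact congrArg UPt.grp (mul_assoc σ τ θ).symm
  | _ => rfl

theorem UPt.act_one {n : ℕ} {G : Subgroup (Equiv.Perm (Fin n))} {𝓑 : Set (Set (Fin n))}
    (x : UPt n G 𝓑) : x.act 1 = x := by
  cases x with
  | grp θ => exact congrArg UPt.grp (one_mul θ)
  | _ => rfl

/-- For every `σ ∈ G`, the map `Φ_σ` fixing `F` pointwise, sending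
`j ↦ σ(j)` on `T`, `(j,μ) ↦ (j, σ∘μ)` on each `D^μ`, and `θ ↦ σθ` on `G`, is an
order-automorphism of `U_{G⋌𝓑}` whose restriction to `T` is `σ`. -/
theorem explicit_automorphism (n : ℕ) (hn : 1 ≤ n) (G : Subgroup (Equiv.Perm (Fin n)))
    (P : BlockPartition n G) (σ : G) :
    ∃ Ψ : UPt n G P.blocks ≃o UPt n G P.blocks,
      (∀ i : Fin n, Ψ (UPt.low i) = UPt.low i) ∧
      (∀ i : Fin n, Ψ (UPt.up i) = UPt.up i) ∧
      (∀ j : Fin n, Ψ (UPt.pt j) = UPt.pt ((σ : Equiv.Perm (Fin n)) j)) ∧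
      (∀ (μ : Restr n G P.blocks) (j : μ.1.1),
        Ψ (UPt.cell μ j) = UPt.cell (Restr.comp σ μ) j) ∧
      (∀ θ : G, Ψ (UPt.grp θ) = UPt.grp (σ * θ)) := by
  let e : UPt n G P.blocks ≃ UPt n G P.blocks :=
    { toFun := UPt.act σ
      invFun := UPt.act σ⁻¹
      left_inv := fun x => by rw [UPt.act_act, inv_mul_cancel, UPt.act_one]
      right_inv := fun x => by rw [UPt.act_act, mul_inv_cancel, UPt.act_one] }
  exact ⟨e.toOrderIso (UPt.act_mono σ) (UPt.act_mono σ⁻¹), fun _ => rfl, fun _ => rfl,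
    fun _ => rfl, fun _ _ => rfl, fun _ => rfl⟩
end

section
/- Let G be a subgroup of S_n with block partition 𝓑, let Ψ be an order-automorphism of U_{G⋌𝓑}, and let σ := Ψ|_T. Then for every μ ∈ ⋃_{B∈𝓑} G|_B, Ψ maps D^μ onto D^{σ∘μ}, and more precisely Ψ(j,μ) = (j, σ∘μ) for every j ∈ dom(μ). -/
namespace UPt

variable {n : ℕ} {G : Subgroup (Equiv.Perm (Fin n))} {𝓑 : Set (Set (Fin n))}

theorem le_of_step {x y : UPt n G 𝓑} (h : UStep n G 𝓑 x y) : x ≤ y :=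
  Relation.ReflTransGen.single h

theorem eq_or_step {x y : UPt n G 𝓑} (h : x ≤ y) :
    x = y ∨ ∃ c, x ≤ c ∧ UStep n G 𝓑 c y := by
  rcases Relation.ReflTransGen.cases_tail h with h | h
  · exact Or.inl h.symm
  · exact Or.inr h

theorem rank_le {x y : UPt n G 𝓑} (h : x ≤ y) : x.rank ≤ y.rank := by
  have h' : Relation.ReflTransGen (UStep n G 𝓑) x y := h
  induction h' with
  | refl => exact le_rfl
  | tail h1 h2 ih => exact (ih h1).trans h2.rank_lt.le

theorem rank_lt {x y : UPt n G 𝓑} (h : x < y) : x.rank < y.rank := by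
  rcases eq_or_step h.le with e | ⟨c, hc, hs⟩
  · exact absurd e h.ne
  · exact (rank_le hc).trans_lt hs.rank_lt

theorem eq_of_le_of_rank {x y : UPt n G 𝓑} (h : x ≤ y) (hr : x.rank = y.rank) : x = y := by
  by_contra hne
  exact (rank_lt (lt_of_le_of_ne h hne)).ne hr

theorem low_le_up_s8 {j i : Fin n} (h : (low j : UPt n G 𝓑) ≤ up i) :
    (j : ℕ) = i ∨ (j : ℕ) = i + 1 := by
  rcases eq_or_step h with e | ⟨c, hc, hs⟩
  · cases e
  · cases hs with
    | fence_eq => cases eq_of_le_of_rank hc rfl; exact Or.inl rfl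
    | fence_succ _ k hk => cases eq_of_le_of_rank hc rfl; exact Or.inr hk

theorem not_grp_le_up {θ : G} {i : Fin n} : ¬ (grp θ : UPt n G 𝓑) ≤ up i := by
  intro h
  rcases eq_or_step h with e | ⟨c, hc, hs⟩
  · cases e
  · cases hs with
    | fence_eq => cases eq_of_le_of_rank hc rfl
    | fence_succ _ k hk => cases eq_of_le_of_rank hc rfl

theorem up_le_cell_s8 {i : Fin n} {μ : Restr n G 𝓑} {j : μ.1.1}
    (h : (up i : UPt n G 𝓑) ≤ cell μ j) : i = j.1 := by
  rcases eq_or_step h with e | ⟨c, hc, hs⟩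
  · cases e
  · cases hs with
    | up_cell => cases eq_of_le_of_rank hc rfl; rfl
    | grp_cell θ => exact absurd (rank_le hc) (by simp [rank])

theorem grp_le_cell_s8 {θ : G} {μ : Restr n G 𝓑} {j : μ.1.1}
    (h : (grp θ : UPt n G 𝓑) ≤ cell μ j) :
    ∀ x : μ.1.1, μ.1.2 x = (θ : Equiv.Perm (Fin n)) x.1 := by
  rcases eq_or_step h with e | ⟨c, hc, hs⟩
  · cases e
  · cases hs with
    | up_cell => exact absurd hc not_grp_le_up
    | grp_cell θ' _ _ h' => cases eq_of_le_of_rank hc rfl; exact h'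

theorem cell_le_pt_s8 {t : Fin n} {μ : Restr n G 𝓑} {j : μ.1.1}
    (h : (cell μ j : UPt n G 𝓑) ≤ pt t) : μ.1.2 j = t := by
  rcases eq_or_step h with e | ⟨c, hc, hs⟩
  · cases e
  · cases hs with
    | cell_pt => cases eq_of_le_of_rank hc rfl; rfl

/-- Every element of positive rank lies above an element of the preceding rank, so `rank` is the
height function of the order. For the elements of `T` this uses that the blocks cover `T`. -/
theorem exists_lt_rank_s8 (hcov : ∀ x : Fin n, ∃ B ∈ 𝓑, x ∈ B) (x : UPt n G 𝓑)
    (hx : x.rank ≠ 0) : ∃ y, y < x ∧ y.rank + 1 = x.rank := by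
  have key : ∀ y, UStep n G 𝓑 y x → y.rank + 1 = x.rank → ∃ y, y < x ∧ y.rank + 1 = x.rank := by
    intro y hs hr
    refine ⟨y, lt_of_le_of_ne (le_of_step hs) ?_, hr⟩
    rintro rfl
    omega
  cases x with
  | low i => exact absurd rfl hx
  | grp θ => exact absurd rfl hx
  | up i => exact key _ (.fence_eq i) rfl
  | cell μ j => exact key _ (.up_cell μ j) rfl
  | pt t =>
    obtain ⟨B, hB, ht⟩ := hcov t
    let μ : Restr n G 𝓑 := ⟨⟨B, fun x => x.1⟩, hB, 1, one_mem G, rfl⟩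
    exact key (cell μ ⟨t, ht⟩) (.cell_pt μ ⟨t, ht⟩) rfl

theorem rank_le_rank_map (hcov : ∀ x : Fin n, ∃ B ∈ 𝓑, x ∈ B) (Ψ : UPt n G 𝓑 ≃o UPt n G 𝓑)
    (k : ℕ) : ∀ x : UPt n G 𝓑, x.rank = k → k ≤ (Ψ x).rank := by
  induction k with
  | zero => intros; exact Nat.zero_le _
  | succ k ih =>
    intro x hx
    obtain ⟨y, hy, hr⟩ := exists_lt_rank_s8 hcov x (by omega)
    have h1 := ih y (by omega)
    have h2 := rank_lt (Ψ.lt_iff_lt.mpr hy)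
    omega

theorem rank_map (hcov : ∀ x : Fin n, ∃ B ∈ 𝓑, x ∈ B) (Ψ : UPt n G 𝓑 ≃o UPt n G 𝓑)
    (x : UPt n G 𝓑) : (Ψ x).rank = x.rank := by
  apply le_antisymm
  · simpa using rank_le_rank_map hcov Ψ.symm _ (Ψ x) rfl
  · exact rank_le_rank_map hcov Ψ _ x rfl

theorem map_up (hcov : ∀ x : Fin n, ∃ B ∈ 𝓑, x ∈ B) (Ψ : UPt n G 𝓑 ≃o UPt n G 𝓑)
    (i : Fin n) : ∃ k, Ψ (up i) = up k := by
  have h := rank_map hcov Ψ (up i)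
  cases hy : Ψ (up i) <;> simp_all [rank]

theorem map_cell (hcov : ∀ x : Fin n, ∃ B ∈ 𝓑, x ∈ B) (Ψ : UPt n G 𝓑 ≃o UPt n G 𝓑)
    (μ : Restr n G 𝓑) (j : μ.1.1) : ∃ ν k, Ψ (cell μ j) = cell ν k := by
  have h := rank_map hcov Ψ (cell μ j)
  cases hy : Ψ (cell μ j) with
  | cell ν k => exact ⟨ν, k, rfl⟩
  | _ => simp [hy, rank] at h

/-- Among the minimal elements, the `ℓ_i` are those that lie below an element of rank `1`. -/
theorem map_low (hcov : ∀ x : Fin n, ∃ B ∈ 𝓑, x ∈ B) (Ψ : UPt n G 𝓑 ≃o UPt n G 𝓑)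
    (i : Fin n) : ∃ k, Ψ (low i) = low k := by
  have h := rank_map hcov Ψ (low i)
  obtain ⟨k, hk⟩ := map_up hcov Ψ i
  have hle : Ψ (low i) ≤ Ψ (up i) := Ψ.monotone (le_of_step (.fence_eq i))
  rw [hk] at hle
  cases hy : Ψ (low i) with
  | low m => exact ⟨m, rfl⟩
  | grp θ => exact absurd (hy ▸ hle) not_grp_le_up
  | _ => simp [hy, rank] at h

theorem map_grp (hcov : ∀ x : Fin n, ∃ B ∈ 𝓑, x ∈ B) (Ψ : UPt n G 𝓑 ≃o UPt n G 𝓑)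
    (θ : G) : ∃ θ', Ψ (grp θ) = grp θ' := by
  have h := rank_map hcov Ψ (grp θ)
  cases hy : Ψ (grp θ) with
  | grp θ' => exact ⟨θ', rfl⟩
  | low m =>
    obtain ⟨k, hk⟩ := map_low hcov Ψ.symm m
    rw [← hy] at hk
    simp at hk
  | _ => simp [hy, rank] at h

/-- The fence is rigid: `Ψ` permutes the `u_i` by some `p` and the `ℓ_i` by some `q`, with
`p i ≤ q i ≤ p i + 1`. Comparing sums gives `p = q`, hence `p (i + 1) = p i + 1`, so `p = id`. -/
theorem map_up_eq (hcov : ∀ x : Fin n, ∃ B ∈ 𝓑, x ∈ B) (Ψ : UPt n G 𝓑 ≃o UPt n G 𝓑)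
    (i : Fin n) : Ψ (up i) = up i := by
  choose p hp using map_up hcov Ψ
  choose q hq using map_low hcov Ψ
  have pinj : Function.Injective p := by
    intro a b hab
    have : Ψ (up a) = Ψ (up b) := by rw [hp, hp, hab]
    simpa using this
  have qinj : Function.Injective q := by
    intro a b hab
    have : Ψ (low a) = Ψ (low b) := by rw [hq, hq, hab]
    simpa using this
  have h0 : ∀ a, (q a : ℕ) = p a ∨ (q a : ℕ) = p a + 1 := by
    intro a
    have := Ψ.monotone (le_of_step (.fence_eq a) : (low a : UPt n G 𝓑) ≤ up a)
    rw [hp, hq] at this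
    exact low_le_up_s8 this
  have h1 : ∀ a b : Fin n, (b : ℕ) = a + 1 → (q b : ℕ) = p a ∨ (q b : ℕ) = p a + 1 := by
    intro a b hab
    have := Ψ.monotone (le_of_step (.fence_succ a b hab) : (low b : UPt n G 𝓑) ≤ up a)
    rw [hp, hq] at this
    exact low_le_up_s8 this
  have hsum : ∑ a, (p a : ℕ) = ∑ a, (q a : ℕ) := by
    rw [(Finite.injective_iff_bijective.mp pinj).sum_comp (fun a : Fin n => (a : ℕ)),
      (Finite.injective_iff_bijective.mp qinj).sum_comp (fun a : Fin n => (a : ℕ))]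
  have hpq : ∀ a, (p a : ℕ) = q a := by
    intro a
    refine (Finset.sum_eq_sum_iff_of_le ?_).mp hsum a (Finset.mem_univ a)
    intro b _
    rcases h0 b with h | h <;> omega
  have hstep : ∀ a b : Fin n, (b : ℕ) = a + 1 → (p b : ℕ) = p a + 1 := by
    intro a b hab
    rcases h1 a b hab with h | h
    · have : p b = p a := Fin.ext (by rw [hpq b, h])
      have := congrArg Fin.val (pinj this)
      omega
    · rw [hpq b, h]
  have hshift : ∀ (k : ℕ) (hk : k < n), (p ⟨k, hk⟩ : ℕ) = p ⟨0, by omega⟩ + k := by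
    intro k
    induction k with
    | zero => intro _; rfl
    | succ k ih =>
      intro hk
      rw [hstep ⟨k, by omega⟩ ⟨k + 1, hk⟩ rfl, ih (by omega)]
      omega
  have hn : 0 < n := i.pos
  -- The last index stays in range, which forces the shift `p 0` to vanish.
  have hlast := hshift (n - 1) (by omega)
  have hlt := (p ⟨n - 1, by omega⟩).isLt
  have hi := hshift i.1 i.2
  rw [hp]
  congr 1
  apply Fin.ext
  have e : (⟨i.1, i.2⟩ : Fin n) = i := rfl
  rw [e] at hi
  omega

end UPt

/-- If `Ψ` is an order-automorphism of `U_{G⋌𝓑}` whose action on `T` is the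
map `σ` (i.e. `σ = Ψ|_T`), then for every `μ ∈ ⋃_{B∈𝓑} G|_B` there is `ν = σ∘μ` in
`⋃_{B∈𝓑} G|_B` (same domain, values composed with `σ`) such that `Ψ` maps `D^μ` onto `D^ν`,
and pointwise `Ψ(j,μ) = (j, σ∘μ)`. -/
theorem automorphism_maps_cells (n : ℕ) (hn : 1 ≤ n) (G : Subgroup (Equiv.Perm (Fin n)))
    (P : BlockPartition n G) (Ψ : UPt n G P.blocks ≃o UPt n G P.blocks)
    (σ : Fin n → Fin n) (hσ : ∀ j : Fin n, Ψ (UPt.pt j) = UPt.pt (σ j)) :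
    ∀ μ : Restr n G P.blocks,
      ∃ ν : Restr n G P.blocks, ∃ h : μ.1.1 = ν.1.1,
        (∀ x : μ.1.1, ν.1.2 ⟨x.1, h ▸ x.2⟩ = σ (μ.1.2 x)) ∧
        (∀ j : μ.1.1, Ψ (UPt.cell μ j) = UPt.cell ν ⟨j.1, h ▸ j.2⟩) ∧
        (⇑Ψ) '' {x : UPt n G P.blocks | ∃ j : μ.1.1, x = UPt.cell μ j} =
          {x : UPt n G P.blocks | ∃ j : ν.1.1, x = UPt.cell ν j} := by
  intro μ
  have hcov : ∀ x : Fin n, ∃ B ∈ P.blocks, x ∈ B := fun x => (P.partitions x).exists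
  obtain ⟨⟨B, f⟩, hB, θ, hθ, hf⟩ := μ
  obtain rfl : f = fun x => θ x.1 := hf
  obtain ⟨θ', hθ'⟩ := UPt.map_grp hcov Ψ ⟨θ, hθ⟩
  let μ : Restr n G P.blocks := ⟨⟨B, fun x => θ x.1⟩, hB, θ, hθ, rfl⟩
  let ν : Restr n G P.blocks := ⟨⟨B, fun x => θ'.1 x.1⟩, hB, θ'.1, θ'.2, rfl⟩
  have hcell : ∀ j : B, Ψ (UPt.cell μ j) = UPt.cell ν j := by
    intro j
    obtain ⟨κ, k, hk⟩ := UPt.map_cell hcov Ψ μ j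
    have hup := Ψ.monotone (UPt.le_of_step (.up_cell μ j))
    rw [hk, UPt.map_up_eq hcov] at hup
    have hjk : j.1 = k.1 := UPt.up_le_cell_s8 hup
    have hgrp := Ψ.monotone (UPt.le_of_step (.grp_cell ⟨θ, hθ⟩ μ j fun _ => rfl))
    rw [hk, hθ'] at hgrp
    have hκ := UPt.grp_le_cell_s8 hgrp
    rw [hk]
    obtain ⟨⟨C, g⟩, hC, _⟩ := κ
    -- Both domains are the block containing `j`.
    obtain rfl : C = B := (P.partitions j.1).unique ⟨hC, hjk ▸ k.2⟩ ⟨hB, j.2⟩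
    obtain rfl : g = fun x => θ'.1 x.1 := funext hκ
    obtain rfl : j = k := Subtype.ext hjk
    rfl
  refine ⟨ν, rfl, ?_, hcell, ?_⟩
  · intro x
    have hpt := Ψ.monotone (UPt.le_of_step (.cell_pt μ x))
    rw [hcell, hσ] at hpt
    exact UPt.cell_le_pt_s8 hpt
  · ext y
    constructor
    · rintro ⟨_, ⟨j, rfl⟩, rfl⟩
      exact ⟨j, hcell j⟩
    · rintro ⟨j, rfl⟩
      exact ⟨_, ⟨j, rfl⟩, hcell j⟩
end
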